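/- For every i with 1 ≤ i ≤ n−1, the following equalities of left ideals of B hold: l.ann_B(b_i c_i) = B c_i a_i, l.ann_B(a_i) = B b_i c_i + B b_{i+1}, and l.ann_B(c_i a_i) = B b_i + B c_{i−1}. -/

import Mathlib

noncomputable section

inductive Gen (n : ℕ) : Type
  | a : Fin (n+1) → Gen n
  | b : Fin (n+1) → Gen n
  | c : Fin (n+1) → Gen n

variable (K : Type) [Field K] (n : ℕ)

/-- The tensor algebra `T(V)` on the span of the generators, i.e. the free algebra. -/
abbrev FA := FreeAlgebra K (Gen n)

/-- `a_i`, with the convention that out-of-range indices give `0`. -/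
def ga (i : ℤ) : FA K n :=
  if h : 0 ≤ i ∧ i ≤ (n : ℤ) then FreeAlgebra.ι K (Gen.a ⟨i.toNat, by omega⟩) else 0

def gb (i : ℤ) : FA K n :=
  if h : 0 ≤ i ∧ i ≤ (n : ℤ) then FreeAlgebra.ι K (Gen.b ⟨i.toNat, by omega⟩) else 0

def gc (i : ℤ) : FA K n :=
  if h : 0 ≤ i ∧ i ≤ (n : ℤ) then FreeAlgebra.ι K (Gen.c ⟨i.toNat, by omega⟩) else 0

/-- The set `R` of defining relations. -/
def rels : Set (FA K n) :=
  { x | x = ga K n n * gb K n n * gc K n n ∨ x = gc K n 0 * ga K n 0 ∨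
      ∃ i : ℕ, i < n ∧
        (x = ga K n i * gb K n i * gc K n i + gc K n (i+1) * ga K n (i+1) * gb K n (i+1) ∨
         x = gb K n (i+1) * gc K n (i+1) * ga K n (i+1) ∨
         x = gc K n i * gc K n (i+1) ∨
         x = gb K n (i+1) * ga K n i) }

/-- The relation whose ring-quotient is `B = T(V)/⟨R⟩`. -/
def BRel (x y : FA K n) : Prop := x ∈ rels K n ∧ y = 0

/-- The algebra `B = T(V)/⟨R⟩`. -/
abbrev B := RingQuot (BRel K n)

/-- The quotient map `π_B : T(V) → B`. -/
def πB : FA K n →ₐ[K] B K n := RingQuot.mkAlgHom K (BRel K n)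

/-- The image of `a_i` in `B` (zero for out-of-range indices). -/
def aB (i : ℤ) : B K n := πB K n (ga K n i)
def bB (i : ℤ) : B K n := πB K n (gb K n i)
def cB (i : ℤ) : B K n := πB K n (gc K n i)

/-- The left annihilator of `x`, as a left ideal of `B`. -/
def lann (x : B K n) : Ideal (B K n) where
  carrier := {w | w * x = 0}
  add_mem' := by
    intro a b ha hb
    simp only [Set.mem_setOf_eq, add_mul] at *
    rw [ha, hb, add_zero]
  zero_mem' := by simp
  smul_mem' := by
    intro c w hw
    simp only [Set.mem_setOf_eq, smul_eq_mul, mul_assoc] at *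
    rw [hw, mul_zero]

end

/-!
Let `B` act from the right on the free module on all words in the letters `a_i`, `b_i`, `c_i`, a
letter being appended to a word by rewriting along `a_i b_i c_i ↦ -c_{i+1} a_{i+1} b_{i+1}` and
along `↦ 0` for the monomial relations. Evaluation of words in `B` intertwines this action with
right multiplication and sends the empty word to `1`, so an element `x` with `x y = 0` is the value
of a combination of words killed by `y`. For the three elements `y` in question the action of `y` on
a single word either vanishes, and then the word visibly evaluates into the claimed left ideal, or
it is plus or minus a word from which the original one can be read off by stripping off letters.
-/

/-- The alphabet `a_i`, `b_i`, `c_i`, indexed by all integers; letters whose index is out of range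
stand for `0` in `B`. -/
inductive Letter : Type
  | a : ℤ → Letter
  | b : ℤ → Letter
  | c : ℤ → Letter
  deriving DecidableEq

/-- Words in the alphabet, stored in reverse: the head of the list is the last letter. -/
abbrev Word := List Letter

section Rewriting

variable (R : Type*) [CommRing R] (n : ℕ)

open Finsupp

/-- Append a letter to a word and rewrite along the defining relations of `B`. The word need not be
reduced. Besides the monomial relations, `c_i a_i b_i c_i` is sent to `0`, because it rewrites to
`-c_i c_{i+1} a_{i+1} b_{i+1}`. -/
noncomputable def Letter.append : Letter → Word → Word →₀ R
  | a i, w =>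
    if [b (i + 1)] <+: w ∨ [c i, b i] <+: w ∨ (i = 0 ∧ [c i] <+: w) then 0
    else single (a i :: w) 1
  | b i, w => single (b i :: w) 1
  | c i, w =>
    if [c (i - 1)] <+: w ∨ [b i, a i, c i] <+: w ∨ (i = n ∧ [b i, a i] <+: w) then 0
    else if [b i, a i] <+: w then -single (b (i + 1) :: a (i + 1) :: c (i + 1) :: w.drop 2) 1
    else single (c i :: w) 1

/-- The linear operator on combinations of words extending `Letter.append`. -/
noncomputable def Letter.act (l : Letter) : Module.End R (Word →₀ R) :=
  linearCombination R (l.append R n)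

namespace Letter

@[simp]
theorem act_single (l : Letter) (w : Word) : l.act R n (single w 1) = l.append R n w := by
  simp [act]

theorem act_a_append_b_succ (i : ℤ) (w : Word) :
    (a i).act R n ((b (i + 1)).append R n w) = 0 := by
  simp [append]

theorem act_a_act_c_append_b (i : ℤ) (w : Word) :
    (a i).act R n ((c i).act R n ((b i).append R n w)) = 0 := by
  rw [append, act_single, append]
  split_ifs <;> simp [append]

theorem act_c_succ_append_c (i : ℤ) (w : Word) :
    (c (i + 1)).act R n ((c i).append R n w) = 0 := by
  rw [append]
  split_ifs <;> simp [append]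

theorem act_a_zero_append_c_zero (w : Word) : (a 0).act R n ((c 0).append R n w) = 0 := by
  rw [append]
  split_ifs <;> simp [append]

theorem act_c_act_b_append_a_self (w : Word) :
    (c n).act R n ((b n).act R n ((a n).append R n w)) = 0 := by
  rw [append]
  split_ifs <;> simp [append]

theorem act_c_act_b_append_a_add {i : ℤ} (hn : i ≠ n) (h0 : i + 1 ≠ 0) (w : Word) :
    (c i).act R n ((b i).act R n ((a i).append R n w)) +
      (b (i + 1)).act R n ((a (i + 1)).act R n ((c (i + 1)).append R n w)) = 0 := by
  by_cases hb : [b (i + 1)] <+: w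
  · obtain ⟨v, rfl⟩ := hb
    have hbca : (a (i + 1)).act R n ((c (i + 1)).append R n (b (i + 1) :: v)) = 0 := by
      simpa only [append, act_single] using act_a_act_c_append_b R n (i + 1) v
    rw [List.singleton_append, hbca, append, if_pos (by simp), map_zero, map_zero, map_zero,
      add_zero]
  by_cases hc : [c i] <+: w
  · obtain ⟨v, rfl⟩ := hc
    simp [append, hn, apply_ite]
  have hcb : ¬[c i, b i] <+: w := fun h => hc (.trans (by simp) h)
  have hba : ¬[b (i + 1), a (i + 1)] <+: w := fun h => hb (.trans (by simp) h)
  have hbac : ¬[b (i + 1), a (i + 1), c (i + 1)] <+: w := fun h => hb (.trans (by simp) h)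
  simp [append, hb, hc, hcb, hba, hbac, hn, h0]

end Letter

end Rewriting

section Relations

variable (K : Type) [Field K] (n : ℕ)

theorem mem_lann {w x : B K n} : w ∈ lann K n x ↔ w * x = 0 :=
  Iff.rfl

theorem πB_eq_zero_of_mem_rels {x : FA K n} (hx : x ∈ rels K n) : πB K n x = 0 := by
  rw [← map_zero (πB K n)]
  exact RingQuot.mkAlgHom_rel K ⟨hx, rfl⟩

theorem aB_eq_zero {i : ℤ} (hi : ¬(0 ≤ i ∧ i ≤ n)) : aB K n i = 0 := by
  rw [aB, ga, dif_neg hi, map_zero]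

theorem bB_eq_zero {i : ℤ} (hi : ¬(0 ≤ i ∧ i ≤ n)) : bB K n i = 0 := by
  rw [bB, gb, dif_neg hi, map_zero]

theorem cB_eq_zero {i : ℤ} (hi : ¬(0 ≤ i ∧ i ≤ n)) : cB K n i = 0 := by
  rw [cB, gc, dif_neg hi, map_zero]

theorem bB_succ_mul_aB (i : ℤ) : bB K n (i + 1) * aB K n i = 0 := by
  by_cases hi : 0 ≤ i ∧ i < n
  · obtain ⟨h0, hn⟩ := hi
    lift i to ℕ using h0
    simp only [aB, bB, ← map_mul]
    exact πB_eq_zero_of_mem_rels K n (.inr (.inr ⟨i, by omega, by simp⟩))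
  · by_cases h0 : 0 ≤ i
    · rw [bB_eq_zero K n (by omega), zero_mul]
    · rw [aB_eq_zero K n (by omega), mul_zero]

theorem cB_mul_cB_succ (i : ℤ) : cB K n i * cB K n (i + 1) = 0 := by
  by_cases hi : 0 ≤ i ∧ i < n
  · obtain ⟨h0, hn⟩ := hi
    lift i to ℕ using h0
    simp only [cB, ← map_mul]
    exact πB_eq_zero_of_mem_rels K n (.inr (.inr ⟨i, by omega, by simp⟩))
  · by_cases h0 : 0 ≤ i
    · rw [cB_eq_zero K n (i := i + 1) (by omega), mul_zero]
    · rw [cB_eq_zero K n (i := i) (by omega), zero_mul]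

theorem cB_pred_mul_cB (i : ℤ) : cB K n (i - 1) * cB K n i = 0 := by
  simpa using cB_mul_cB_succ K n (i - 1)

theorem cB_zero_mul_aB_zero : cB K n 0 * aB K n 0 = 0 := by
  simp only [cB, aB, ← map_mul]
  exact πB_eq_zero_of_mem_rels K n (.inr (.inl rfl))

theorem bB_mul_cB_mul_aB (i : ℤ) : bB K n i * (cB K n i * aB K n i) = 0 := by
  obtain rfl | hi0 := eq_or_ne i 0
  · rw [cB_zero_mul_aB_zero, mul_zero]
  by_cases hi : 0 ≤ i ∧ i ≤ n
  · obtain ⟨j, rfl⟩ : ∃ j : ℕ, i = j + 1 := ⟨(i - 1).toNat, by omega⟩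
    simp only [aB, bB, cB, ← map_mul, ← mul_assoc]
    exact πB_eq_zero_of_mem_rels K n (.inr (.inr ⟨j, by omega, by simp⟩))
  · rw [bB_eq_zero K n hi, zero_mul]

theorem aB_mul_bB_mul_cB_self : aB K n n * (bB K n n * cB K n n) = 0 := by
  simp only [aB, bB, cB, ← map_mul, ← mul_assoc]
  exact πB_eq_zero_of_mem_rels K n (.inl rfl)

theorem aB_mul_bB_mul_cB_add (i : ℤ) :
    aB K n i * (bB K n i * cB K n i) +
      cB K n (i + 1) * (aB K n (i + 1) * bB K n (i + 1)) = 0 := by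
  by_cases hi : 0 ≤ i ∧ i < n
  · obtain ⟨h0, hn⟩ := hi
    lift i to ℕ using h0
    simp only [aB, bB, cB, ← map_mul, ← map_add, ← mul_assoc]
    exact πB_eq_zero_of_mem_rels K n (.inr (.inr ⟨i, by omega, by simp⟩))
  have habc : aB K n i * (bB K n i * cB K n i) = 0 := by
    obtain rfl | hin := eq_or_ne i n
    · exact aB_mul_bB_mul_cB_self K n
    · rw [aB_eq_zero K n (by omega), zero_mul]
  have hcab : cB K n (i + 1) * (aB K n (i + 1) * bB K n (i + 1)) = 0 := by
    obtain hi1 | hi1 := eq_or_ne (i + 1) 0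
    · rw [hi1, ← mul_assoc, cB_zero_mul_aB_zero, zero_mul]
    · rw [cB_eq_zero K n (by omega), zero_mul]
  rw [habc, hcab, add_zero]

theorem cB_mul_aB_mul_bB_mul_cB (i : ℤ) :
    cB K n i * (aB K n i * (bB K n i * cB K n i)) = 0 := by
  simpa [mul_add, ← mul_assoc, cB_mul_cB_succ] using
    congrArg (cB K n i * ·) (aB_mul_bB_mul_cB_add K n i)

end Relations

section Representation

variable (K : Type) [Field K] (n : ℕ)

open Finsupp MulOpposite

/-- The index-preserving embedding of the generators of `B` into the alphabet. -/
def Gen.toLetter {n : ℕ} : Gen n → Letter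
  | .a i => .a i.val
  | .b i => .b i.val
  | .c i => .c i.val

/-- The right action of the free algebra on combinations of words, in which generators act by
`Letter.act`. -/
noncomputable def freeAction : FA K n →ₐ[K] (Module.End K (Word →₀ K))ᵐᵒᵖ :=
  FreeAlgebra.lift K fun g => op (g.toLetter.act K n)

theorem freeAction_ga {i : ℤ} (h0 : 0 ≤ i) (hn : i ≤ n) :
    freeAction K n (ga K n i) = op ((Letter.a i).act K n) := by
  simp [freeAction, ga, h0, hn, Gen.toLetter]

theorem freeAction_gb {i : ℤ} (h0 : 0 ≤ i) (hn : i ≤ n) :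
    freeAction K n (gb K n i) = op ((Letter.b i).act K n) := by
  simp [freeAction, gb, h0, hn, Gen.toLetter]

theorem freeAction_gc {i : ℤ} (h0 : 0 ≤ i) (hn : i ≤ n) :
    freeAction K n (gc K n i) = op ((Letter.c i).act K n) := by
  simp [freeAction, gc, h0, hn, Gen.toLetter]

theorem freeAction_eq_zero_of_mem_rels {x : FA K n} (hx : x ∈ rels K n) :
    freeAction K n x = 0 := by
  apply unop_injective
  ext1 w
  ext1
  rw [LinearMap.comp_apply, lsingle_apply]
  rcases hx with rfl | rfl | ⟨i, hi, rfl | rfl | rfl | rfl⟩ <;>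
    simp (disch := omega) only [map_mul, map_add, freeAction_ga, freeAction_gb, freeAction_gc,
      unop_mul, unop_add, unop_op, Module.End.mul_apply, LinearMap.add_apply, Letter.act_single]
  · exact Letter.act_c_act_b_append_a_self K n w
  · exact Letter.act_a_zero_append_c_zero K n w
  · exact Letter.act_c_act_b_append_a_add K n (by omega) (by omega) w
  · exact Letter.act_a_act_c_append_b K n _ w
  · exact Letter.act_c_succ_append_c K n _ w
  · exact Letter.act_a_append_b_succ K n _ w

/-- The right action of `B` on combinations of words induced by `freeAction`. -/
noncomputable def wordAction : B K n →ₐ[K] (Module.End K (Word →₀ K))ᵐᵒᵖ :=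
  RingQuot.liftAlgHom K ⟨freeAction K n, fun {x y} ⟨hx, hy⟩ => by
    rw [hy, map_zero, freeAction_eq_zero_of_mem_rels K n hx]⟩

theorem wordAction_πB (x : FA K n) : wordAction K n (πB K n x) = freeAction K n x := by
  simp [wordAction, πB]

theorem wordAction_aB {i : ℤ} (h0 : 0 ≤ i) (hn : i ≤ n) :
    wordAction K n (aB K n i) = op ((Letter.a i).act K n) := by
  rw [aB, wordAction_πB, freeAction_ga K n h0 hn]

theorem wordAction_bB {i : ℤ} (h0 : 0 ≤ i) (hn : i ≤ n) :
    wordAction K n (bB K n i) = op ((Letter.b i).act K n) := by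
  rw [bB, wordAction_πB, freeAction_gb K n h0 hn]

theorem wordAction_cB {i : ℤ} (h0 : 0 ≤ i) (hn : i ≤ n) :
    wordAction K n (cB K n i) = op ((Letter.c i).act K n) := by
  rw [cB, wordAction_πB, freeAction_gc K n h0 hn]

/-- The element of `B` denoted by a letter. -/
noncomputable def Letter.eval : Letter → B K n
  | a i => aB K n i
  | b i => bB K n i
  | c i => cB K n i

theorem πB_ι (g : Gen n) : πB K n (FreeAlgebra.ι K g) = g.toLetter.eval K n := by
  rcases g with i | i | i <;>
    simp [Gen.toLetter, Letter.eval, aB, bB, cB, ga, gb, gc, Nat.lt_succ_iff.mp i.isLt]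

/-- The product in `B` of the letters of a word. -/
noncomputable def wordEval : Word → B K n
  | [] => 1
  | l :: w => wordEval w * l.eval K n

/-- The linear extension of `wordEval` to combinations of words. -/
noncomputable def combEval : (Word →₀ K) →ₗ[K] B K n := linearCombination K (wordEval K n)

@[simp]
theorem combEval_single (w : Word) : combEval K n (single w 1) = wordEval K n w := by
  simp [combEval]

theorem combEval_append_a (i : ℤ) (w : Word) :
    combEval K n ((Letter.a i).append K n w) = wordEval K n w * aB K n i := by
  rw [Letter.append]
  split_ifs with hzero
  · rcases hzero with ⟨v, rfl⟩ | ⟨v, rfl⟩ | ⟨rfl, v, rfl⟩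
    · simp [wordEval, Letter.eval, mul_assoc, bB_succ_mul_aB]
    · simp [wordEval, Letter.eval, mul_assoc, bB_mul_cB_mul_aB]
    · simp [wordEval, Letter.eval, mul_assoc, cB_zero_mul_aB_zero]
  · exact combEval_single K n _

theorem combEval_append_c (i : ℤ) (w : Word) :
    combEval K n ((Letter.c i).append K n w) = wordEval K n w * cB K n i := by
  rw [Letter.append]
  split_ifs with hzero hba
  · rcases hzero with ⟨v, rfl⟩ | ⟨v, rfl⟩ | ⟨rfl, v, rfl⟩
    · simp [wordEval, Letter.eval, mul_assoc, cB_pred_mul_cB]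
    · simp [wordEval, Letter.eval, mul_assoc, cB_mul_aB_mul_bB_mul_cB]
    · simp [wordEval, Letter.eval, mul_assoc, aB_mul_bB_mul_cB_self]
  · obtain ⟨v, rfl⟩ := hba
    rw [map_neg, combEval_single]
    refine neg_eq_of_add_eq_zero_left ?_
    simp [wordEval, Letter.eval, mul_assoc, ← mul_add, aB_mul_bB_mul_cB_add]
  · exact combEval_single K n _

theorem combEval_append (l : Letter) (w : Word) :
    combEval K n (l.append K n w) = wordEval K n w * l.eval K n := by
  cases l with
  | a i => exact combEval_append_a K n i w
  | b i => exact combEval_single K n _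
  | c i => exact combEval_append_c K n i w

theorem combEval_act (l : Letter) (m : Word →₀ K) :
    combEval K n (l.act K n m) = combEval K n m * l.eval K n := by
  suffices h : combEval K n ∘ₗ l.act K n = LinearMap.mulRight K (l.eval K n) ∘ₗ combEval K n from
    LinearMap.congr_fun h m
  ext w
  simp [combEval_append]

theorem combEval_wordAction (x : B K n) (m : Word →₀ K) :
    combEval K n ((wordAction K n x).unop m) = combEval K n m * x := by
  obtain ⟨x, rfl⟩ : ∃ y, πB K n y = x := RingQuot.mkAlgHom_surjective K _ x
  induction x using FreeAlgebra.induction generalizing m with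
  | grade0 r => simp [Algebra.algebraMap_eq_smul_one]
  | grade1 g =>
    rw [wordAction_πB, freeAction, FreeAlgebra.lift_ι_apply, unop_op, combEval_act, πB_ι]
  | mul x y hx hy => simp [hx, hy, mul_assoc]
  | add x y hx hy => simp [hx, hy, mul_add]

theorem exists_mem_combEval_eq_add (I : Ideal (B K n)) (T : Module.End K (Word →₀ K))
    (hT : ∀ w, T (single w 1) = single w 1 ∨ T (single w 1) = 0 ∧ wordEval K n w ∈ I)
    (m : Word →₀ K) : ∃ z ∈ I, combEval K n m = z + combEval K n (T m) := by
  induction m using Finsupp.induction_linear with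
  | zero => exact ⟨0, I.zero_mem, by simp⟩
  | add f g hf hg =>
    obtain ⟨u, hu, hfu⟩ := hf
    obtain ⟨v, hv, hgv⟩ := hg
    exact ⟨u + v, I.add_mem hu hv, by simp only [map_add, hfu, hgv, add_add_add_comm]⟩
  | single w r =>
    rw [← smul_single_one]
    rcases hT w with hw | ⟨hw, hwI⟩
    · exact ⟨0, I.zero_mem, by simp only [map_smul, hw, zero_add]⟩
    · refine ⟨r • wordEval K n w, Submodule.smul_of_tower_mem I r hwI, ?_⟩
      simp only [map_smul, hw, combEval_single, map_zero, smul_zero, add_zero]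

theorem lann_le_of_forall_word {y : B K n} {I : Ideal (B K n)}
    (strip : Module.End K (Word →₀ K))
    (hstrip : ∀ w, strip ((wordAction K n y).unop (single w 1)) = single w 1 ∨
      (wordAction K n y).unop (single w 1) = 0 ∧ wordEval K n w ∈ I) :
    lann K n y ≤ I := by
  intro x hx
  rw [mem_lann] at hx
  have annihilated : (wordAction K n y).unop ((wordAction K n x).unop (single [] 1)) = 0 := by
    rw [← Module.End.mul_apply, ← unop_mul, ← map_mul, hx, map_zero, unop_zero,
      LinearMap.zero_apply]
  have x_eq : combEval K n ((wordAction K n x).unop (single [] 1)) = x := by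
    rw [combEval_wordAction, combEval_single, wordEval, one_mul]
  obtain ⟨z, hz, hxz⟩ := exists_mem_combEval_eq_add K n I (strip * (wordAction K n y).unop)
    (fun w => (hstrip w).imp id fun ⟨hw, hwI⟩ => ⟨by simp [hw], hwI⟩)
    ((wordAction K n x).unop (single [] 1))
  rw [x_eq, Module.End.mul_apply, annihilated, map_zero, map_zero, add_zero] at hxz
  rwa [hxz]

end Representation

section Annihilators

variable (K : Type) [Field K] {n : ℕ} {i : ℤ}

open Finsupp Letter

/-- Recovers the word `w` from the result of appending `b_i c_i` to it, which is either `w b_i c_i`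
or, if `w = v a_i`, equal to `-v c_{i+1} a_{i+1} b_{i+1}`. -/
noncomputable def stripBC (i : ℤ) : Word → Word →₀ K
  | c _ :: b _ :: w => single w 1
  | b _ :: a _ :: c _ :: w => -single (a i :: w) 1
  | _ => 0

theorem lann_bB_mul_cB (h0 : 0 ≤ i) (hn : i < n) :
    lann K n (bB K n i * cB K n i) = Ideal.span {cB K n i * aB K n i} := by
  apply le_antisymm
  · refine lann_le_of_forall_word K n (linearCombination K (stripBC K i)) fun w => ?_
    simp only [map_mul, MulOpposite.unop_mul, MulOpposite.unop_op, wordAction_bB K n h0 hn.le,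
      wordAction_cB K n h0 hn.le, Module.End.mul_apply, act_single, append]
    by_cases hac : [a i, c i] <+: w
    · obtain ⟨v, rfl⟩ := hac
      refine .inr ⟨by simp, ?_⟩
      simp only [wordEval, eval, mul_assoc, List.cons_append, List.nil_append]
      exact Ideal.mem_span_singleton'.mpr ⟨_, rfl⟩
    · left
      by_cases ha : [a i] <+: w
      · obtain ⟨v, rfl⟩ := ha
        have hv : ¬[c i] <+: v := by simpa using hac
        simp [hv, hn.ne, stripBC]
      · simp [ha, hac, stripBC]
  · rw [Ideal.span_singleton_le_iff_mem, mem_lann, mul_assoc, cB_mul_aB_mul_bB_mul_cB]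

theorem lann_aB (h0 : 0 < i) (hn : i ≤ n) :
    lann K n (aB K n i) = Ideal.span {bB K n i * cB K n i} + Ideal.span {bB K n (i + 1)} := by
  apply le_antisymm
  · refine lann_le_of_forall_word K n (lmapDomain K K List.tail) fun w => ?_
    simp only [wordAction_aB K n h0.le hn, MulOpposite.unop_op, act_single, append]
    split_ifs with hzero
    · refine .inr ⟨rfl, ?_⟩
      rcases hzero with ⟨v, rfl⟩ | ⟨v, rfl⟩ | ⟨hi, -⟩
      · exact Ideal.mem_sup_right (Ideal.mem_span_singleton'.mpr ⟨_, rfl⟩)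
      · simp only [wordEval, eval, mul_assoc, List.cons_append, List.nil_append]
        exact Ideal.mem_sup_left (Ideal.mem_span_singleton'.mpr ⟨_, rfl⟩)
      · exact absurd hi h0.ne'
    · simp
  · refine sup_le ?_ ?_ <;> rw [Ideal.span_singleton_le_iff_mem, mem_lann]
    · rw [mul_assoc, bB_mul_cB_mul_aB]
    · exact bB_succ_mul_aB K n i

theorem lann_cB_mul_aB (h0 : 0 < i) (hn : i ≤ n) :
    lann K n (cB K n i * aB K n i) = Ideal.span {bB K n i} + Ideal.span {cB K n (i - 1)} := by
  apply le_antisymm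
  · refine lann_le_of_forall_word K n (lmapDomain K K (List.drop 2)) fun w => ?_
    simp only [map_mul, MulOpposite.unop_mul, MulOpposite.unop_op, wordAction_aB K n h0.le hn,
      wordAction_cB K n h0.le hn, Module.End.mul_apply, act_single]
    by_cases hb : [b i] <+: w
    · obtain ⟨v, rfl⟩ := hb
      refine .inr ⟨?_, Ideal.mem_sup_left (Ideal.mem_span_singleton'.mpr ⟨_, rfl⟩)⟩
      simpa [append] using act_a_act_c_append_b K n i v
    by_cases hc : [c (i - 1)] <+: w
    · obtain ⟨v, rfl⟩ := hc
      exact .inr ⟨by simp [append], Ideal.mem_sup_right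
        (Ideal.mem_span_singleton'.mpr ⟨_, rfl⟩)⟩
    · left
      have hba : ¬[b i, a i] <+: w := fun h => hb (.trans (by simp) h)
      have hbac : ¬[b i, a i, c i] <+: w := fun h => hb (.trans (by simp) h)
      simp [append, hb, hc, hba, hbac, h0.ne']
  · refine sup_le ?_ ?_ <;> rw [Ideal.span_singleton_le_iff_mem, mem_lann]
    · rw [bB_mul_cB_mul_aB]
    · rw [← mul_assoc, cB_pred_mul_cB, zero_mul]

end Annihilators

/-- left annihilator ideals of `b_i c_i`, `a_i`, and `c_i a_i` for `1 ≤ i ≤ n-1`. -/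
theorem stmt_3 (K : Type) [Field K] (n : ℕ) (i : ℕ) (h1 : 1 ≤ i) (h2 : i ≤ n - 1) :
    lann K n (bB K n i * cB K n i) = Ideal.span {cB K n i * aB K n i} ∧
    lann K n (aB K n i) =
      Ideal.span {bB K n i * cB K n i} + Ideal.span {bB K n (i+1)} ∧
    lann K n (cB K n i * aB K n i) =
      Ideal.span {bB K n i} + Ideal.span {cB K n ((i : ℤ) - 1)} := by
  exact ⟨lann_bB_mul_cB K (by omega) (by omega), lann_aB K (by omega) (by omega),
    lann_cB_mul_aB K (by omega) (by omega)⟩
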